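/- Time-sharing (concatenation) for bidirectional broadcast codes: Let W₁ : A → S(H₁) and W₂ : A → S(H₂) be classical-quantum channels with a common finite input alphabet A. Given an (m, J₁, J₂) bidirectional broadcast code with average errors e₁ ≤ ε₁ and e₂ ≤ ε₁, and an (n, J₁′, J₂′) bidirectional broadcast code with average errors e₁ ≤ ε₂ and e₂ ≤ ε₂, there exists an (m+n, J₁·J₁′, J₂·J₂′) bidirectional broadcast code with average errors e₁ ≤ ε₁ + ε₂ and e₂ ≤ ε₁ + ε₂, obtained by concatenating codewords and tensoring the corresponding decoding operators. -/

import Mathlib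

open scoped BigOperators ComplexOrder

noncomputable section

/-- The Loewner order on operators: `A ≤ B` iff `B - A` is positive semidefinite. -/
def loewnerLE {ι : Type*} [Fintype ι] (A B : Matrix ι ι ℂ) : Prop := (B - A).PosSemidef

/-- A quantum state: a positive semidefinite operator with unit trace. -/
def IsState {ι : Type*} [Fintype ι] (ρ : Matrix ι ι ℂ) : Prop := ρ.PosSemidef ∧ ρ.trace = 1

/-- The von Neumann entropy `S(ρ) = −tr(ρ log₂ ρ)`, computed via eigenvalues. -/
noncomputable def vnEntropy {ι : Type*} [Fintype ι] [DecidableEq ι] (ρ : Matrix ι ι ℂ) : ℝ :=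
  if h : ρ.IsHermitian then -∑ i, h.eigenvalues i * Real.logb 2 (h.eigenvalues i) else 0

/-- The trace norm `‖A‖₁ = tr √(AᴴA)` (sum of singular values). -/
noncomputable def traceNorm {ι : Type*} [Fintype ι] [DecidableEq ι] (A : Matrix ι ι ℂ) : ℝ :=
  ∑ i, Real.sqrt ((Matrix.posSemidef_conjTranspose_mul_self A).1.eigenvalues i)

/-- A probability distribution on a finite set. -/
def IsDist {A : Type*} [Fintype A] (P : A → ℝ) : Prop := (∀ a, 0 ≤ P a) ∧ ∑ a, P a = 1

/-- The Holevo quantity `χ(P;W) = S(PW) − Σ_a P(a) S(W(a))`. -/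
noncomputable def holevo {A ι : Type*} [Fintype A] [Fintype ι] [DecidableEq ι]
    (P : A → ℝ) (W : A → Matrix ι ι ℂ) : ℝ :=
  vnEntropy (∑ a, (P a : ℂ) • W a) - ∑ a, P a * vnEntropy (W a)

/-- Tensor product `M 0 ⊗ ⋯ ⊗ M (n−1)` of matrices, realized on the index set `Fin n → ι`. -/
def tensorPow {n : ℕ} {ι : Type*} [Fintype ι] (M : Fin n → Matrix ι ι ℂ) :
    Matrix (Fin n → ι) (Fin n → ι) ℂ :=
  Matrix.of fun i j => ∏ k, M k (i k) (j k)

/-- The `n`-fold extension `W^{⊗n}(xⁿ) = W(x₁) ⊗ ⋯ ⊗ W(xₙ)` of a cq channel. -/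
def cqPow {A ι : Type*} [Fintype ι] (W : A → Matrix ι ι ℂ) (n : ℕ) (x : Fin n → A) :
    Matrix (Fin n → ι) (Fin n → ι) ℂ :=
  tensorPow fun k => W (x k)

/-- A POVM: positive semidefinite operators summing to at most the identity. -/
def IsPOVM {ι J : Type*} [Fintype ι] [DecidableEq ι] [Fintype J] (D : J → Matrix ι ι ℂ) : Prop :=
  (∀ j, (D j).PosSemidef) ∧ loewnerLE (∑ j, D j) 1

/-- Existence of an `(n, J₁, J₂)` bidirectional broadcast code for the cq channels `W₁`, `W₂`
with average errors `e₁ ≤ ε₁` and `e₂ ≤ ε₂`. -/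
def BroadcastCodeExists {A ι₁ ι₂ : Type*} [Fintype A] [Fintype ι₁] [DecidableEq ι₁]
    [Fintype ι₂] [DecidableEq ι₂]
    (W1 : A → Matrix ι₁ ι₁ ℂ) (W2 : A → Matrix ι₂ ι₂ ℂ)
    (n J1 J2 : ℕ) (ε₁ ε₂ : ℝ) : Prop :=
  ∃ (w : Fin J1 × Fin J2 → Fin n → A)
    (D1 : Fin J2 → Fin J1 → Matrix (Fin n → ι₁) (Fin n → ι₁) ℂ)
    (D2 : Fin J1 → Fin J2 → Matrix (Fin n → ι₂) (Fin n → ι₂) ℂ),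
    (∀ m2, IsPOVM (D1 m2)) ∧ (∀ m1, IsPOVM (D2 m1)) ∧
    (∀ m2, ((J1 : ℝ))⁻¹ * ∑ m1, ((1 - D1 m2 m1) * cqPow W1 n (w (m1, m2))).trace.re ≤ ε₁) ∧
    (∀ m1, ((J2 : ℝ))⁻¹ * ∑ m2, ((1 - D2 m1 m2) * cqPow W2 n (w (m1, m2))).trace.re ≤ ε₂)


/-- Existence of an `(n, J₁, J₂)` code for the cq multiple-access channel `W`
with average error at most `ε`. -/
def MACCodeExists {Y1 Y2 ι : Type*} [Fintype ι] [DecidableEq ι]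
    (W : Y1 → Y2 → Matrix ι ι ℂ) (n J1 J2 : ℕ) (ε : ℝ) : Prop :=
  ∃ (u : Fin J1 → Fin n → Y1) (v : Fin J2 → Fin n → Y2)
    (D : Fin J1 × Fin J2 → Matrix (Fin n → ι) (Fin n → ι) ℂ),
    IsPOVM D ∧
    (1 / ((J1 : ℝ) * (J2 : ℝ))) * ∑ m : Fin J1 × Fin J2,
      ((1 - D m) * tensorPow (fun k => W (u m.1 k) (v m.2 k))).trace.re ≤ ε

end

/-!
On the concatenated block, `1 - D ⊗ D' = (1 - D) ⊗ 1 + D ⊗ (1 - D')`, and both summands are positive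
semidefinite when `D` and `D'` are effects. Summing over outcomes, this makes the tensored decoders
a POVM; tracing against `ρ ⊗ ρ'`, it bounds the error probability of each message pair by the sum of
the two individual error probabilities. Averaging over message pairs gives the sum of the two
average errors.
-/

open Matrix Finset
open scoped Kronecker

section PosSemidef

open scoped MatrixOrder in
theorem trace_mul_nonneg_of_posSemidef {𝕜 ι : Type*} [RCLike 𝕜] [Fintype ι] {M N : Matrix ι ι 𝕜}
    (hM : M.PosSemidef) (hN : N.PosSemidef) : 0 ≤ (M * N).trace := by
  classical
  obtain ⟨B, rfl⟩ := CStarAlgebra.nonneg_iff_eq_star_mul_self.mp hM.nonneg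
  rw [trace_mul_cycle, trace_mul_cycle]
  exact (hN.mul_mul_conjTranspose_same B).trace_nonneg

variable {𝕜 ι ι' : Type*} [RCLike 𝕜] [DecidableEq ι] [DecidableEq ι']

theorem trace_mul_le_trace [Fintype ι] {D ρ : Matrix ι ι 𝕜} (hD : (1 - D).PosSemidef)
    (hρ : ρ.PosSemidef) : (D * ρ).trace ≤ ρ.trace := by
  have h := trace_mul_nonneg_of_posSemidef hD hρ
  rwa [Matrix.sub_mul, Matrix.one_mul, trace_sub, sub_nonneg] at h

theorem one_sub_kronecker {R : Type*} [NonAssocRing R] (M : Matrix ι ι R) (N : Matrix ι' ι' R) :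
    1 - M ⊗ₖ N = (1 - M) ⊗ₖ 1 + M ⊗ₖ (1 - N) := by
  rw [← one_kronecker_one]
  ext i j
  simp only [Matrix.sub_apply, Matrix.add_apply, kroneckerMap_apply, sub_mul, mul_sub]
  abel

theorem one_sub_kronecker_posSemidef [Finite ι] [Finite ι'] {M : Matrix ι ι 𝕜}
    {N : Matrix ι' ι' 𝕜} (hM : M.PosSemidef) (hM' : (1 - M).PosSemidef)
    (hN : (1 - N).PosSemidef) : (1 - M ⊗ₖ N).PosSemidef := by
  rw [one_sub_kronecker]
  exact (hM'.kronecker .one).add (hM.kronecker hN)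

end PosSemidef

theorem sum_kronecker_sum {R J J' l m n p : Type*} [NonUnitalNonAssocSemiring R]
    [Fintype J] [Fintype J'] (D : J → Matrix l m R) (D' : J' → Matrix n p R) :
    ∑ k : J × J', D k.1 ⊗ₖ D' k.2 = (∑ j, D j) ⊗ₖ (∑ j', D' j') := by
  ext i j
  simp only [Matrix.sum_apply, kroneckerMap_apply, Fintype.sum_mul_sum, Fintype.sum_prod_type]

theorem trace_reindex {R ι κ : Type*} [AddCommMonoid R] [Fintype ι] [Fintype κ] (e : ι ≃ κ)
    (M : Matrix ι ι R) : (reindex e e M).trace = M.trace :=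
  Equiv.sum_comp e.symm fun i => M i i

section Expect

variable {J J' M : Type*} [AddCommMonoid M] [PartialOrder M] [Module ℚ≥0 M]

theorem expect_const_le (s : Finset J) {a : M} (ha : 0 ≤ a) : 𝔼 _j ∈ s, a ≤ a := by
  obtain rfl | hs := s.eq_empty_or_nonempty
  · rwa [expect_empty]
  · rw [expect_const hs]

theorem expect_product_add_le [IsOrderedAddMonoid M] [PosSMulMono ℚ≥0 M] (s : Finset J)
    (t : Finset J') {f : J → M} {g : J' → M} (hf : ∀ j ∈ s, 0 ≤ f j) (hg : ∀ j' ∈ t, 0 ≤ g j') :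
    𝔼 k ∈ s ×ˢ t, (f k.1 + g k.2) ≤ 𝔼 j ∈ s, f j + 𝔼 j' ∈ t, g j' := by
  simp only [expect_product, expect_add_distrib]
  exact add_le_add (expect_le_expect fun j hj => expect_const_le t (hf j hj))
    (expect_const_le s (expect_nonneg hg))

end Expect

section Substate

/-- A subnormalized state: a positive semidefinite operator of trace at most one, such as the output
of a channel that loses its input with some probability. -/
def IsSubstate {ι : Type*} [Fintype ι] (ρ : Matrix ι ι ℂ) : Prop := ρ.PosSemidef ∧ ρ.trace ≤ 1

variable {ι : Type*} [Fintype ι]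

theorem IsState.isSubstate {ρ : Matrix ι ι ℂ} (hρ : IsState ρ) : IsSubstate ρ :=
  ⟨hρ.1, hρ.2.le⟩

variable {n : ℕ}

theorem tensorPow_mul_tensorPow (M N : Fin n → Matrix ι ι ℂ) :
    tensorPow M * tensorPow N = tensorPow fun k => M k * N k := by
  ext i j
  simp only [tensorPow, mul_apply, of_apply, ← prod_mul_distrib]
  exact (Fintype.prod_sum fun k l => M k (i k) l * N k l (j k)).symm

theorem conjTranspose_tensorPow (M : Fin n → Matrix ι ι ℂ) :
    (tensorPow M)ᴴ = tensorPow fun k => (M k)ᴴ := by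
  ext i j
  simp only [tensorPow, conjTranspose_apply, of_apply, star_prod]

theorem trace_tensorPow (M : Fin n → Matrix ι ι ℂ) : (tensorPow M).trace = ∏ k, (M k).trace :=
  (Fintype.prod_sum fun k l => M k l l).symm

open scoped MatrixOrder in
theorem tensorPow_posSemidef {M : Fin n → Matrix ι ι ℂ} (hM : ∀ k, (M k).PosSemidef) :
    (tensorPow M).PosSemidef := by
  classical
  choose B hB using fun k => CStarAlgebra.nonneg_iff_eq_star_mul_self.mp (hM k).nonneg
  have hfactor : tensorPow M = (tensorPow B)ᴴ * tensorPow B := by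
    rw [conjTranspose_tensorPow, tensorPow_mul_tensorPow]
    exact congrArg tensorPow (funext hB)
  exact hfactor ▸ posSemidef_conjTranspose_mul_self _

theorem tensorPow_isSubstate {ρ : Fin n → Matrix ι ι ℂ} (hρ : ∀ k, IsSubstate (ρ k)) :
    IsSubstate (tensorPow ρ) := by
  refine ⟨tensorPow_posSemidef fun k => (hρ k).1, ?_⟩
  rw [trace_tensorPow]
  exact prod_le_one (fun k _ => (hρ k).1.trace_nonneg) fun k _ => (hρ k).2

end Substate

section Kronecker

variable {J J' ι ι' : Type*} [Fintype J] [Fintype J'] [Fintype ι] [DecidableEq ι]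
  [Fintype ι'] [DecidableEq ι']

theorem IsPOVM.one_sub_posSemidef {D : J → Matrix ι ι ℂ} (hD : IsPOVM D) (j : J) :
    (1 - D j).PosSemidef := by
  classical
  have hsplit : 1 - D j = (1 - ∑ i, D i) + ∑ i ∈ univ.erase j, D i := by
    rw [← add_sum_erase _ _ (mem_univ j)]
    abel
  rw [hsplit]
  exact PosSemidef.add hD.2 (posSemidef_sum _ fun i _ => hD.1 i)

protected theorem IsPOVM.kronecker {D : J → Matrix ι ι ℂ} {D' : J' → Matrix ι' ι' ℂ}
    (hD : IsPOVM D) (hD' : IsPOVM D') : IsPOVM fun k : J × J' => D k.1 ⊗ₖ D' k.2 := by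
  refine ⟨fun k => (hD.1 k.1).kronecker (hD'.1 k.2), ?_⟩
  rw [loewnerLE, sum_kronecker_sum]
  exact one_sub_kronecker_posSemidef (posSemidef_sum _ fun j _ => hD.1 j) hD.2 hD'.2

protected theorem IsPOVM.reindex {K κ : Type*} [Fintype K] [Fintype κ] [DecidableEq κ]
    {D : J → Matrix ι ι ℂ} (hD : IsPOVM D) (f : K ≃ J) (e : ι ≃ κ) :
    IsPOVM fun k => reindex e e (D (f k)) := by
  refine ⟨fun k => (hD.1 (f k)).submatrix e.symm, ?_⟩
  have hcompl : 1 - ∑ k, reindex e e (D (f k)) = reindex e e (1 - ∑ j, D j) := by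
    simp only [← coe_reindexAlgEquiv ℂ ℂ, map_sub, map_one, map_sum, ← Equiv.sum_comp f D]
  rw [loewnerLE, hcompl]
  exact PosSemidef.submatrix hD.2 e.symm

theorem trace_one_sub_kronecker_mul_le {D ρ : Matrix ι ι ℂ} {D' ρ' : Matrix ι' ι' ℂ}
    (hD : (1 - D).PosSemidef) (hD' : (1 - D').PosSemidef)
    (hρ : IsSubstate ρ) (hρ' : IsSubstate ρ') :
    ((1 - D ⊗ₖ D') * (ρ ⊗ₖ ρ')).trace ≤ ((1 - D) * ρ).trace + ((1 - D') * ρ').trace := by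
  calc ((1 - D ⊗ₖ D') * (ρ ⊗ₖ ρ')).trace
      = ((1 - D) * ρ).trace * ρ'.trace + (D * ρ).trace * ((1 - D') * ρ').trace := by
        rw [one_sub_kronecker, Matrix.add_mul, ← mul_kronecker_mul, ← mul_kronecker_mul, trace_add,
          trace_kronecker, trace_kronecker, Matrix.one_mul]
    _ ≤ ((1 - D) * ρ).trace + ((1 - D') * ρ').trace :=
        add_le_add
          (mul_le_of_le_one_right (trace_mul_nonneg_of_posSemidef hD hρ.1) hρ'.2)
          (mul_le_of_le_one_left (trace_mul_nonneg_of_posSemidef hD' hρ'.1)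
            ((trace_mul_le_trace hD hρ.1).trans hρ.2))

/-- The average error of one receiver, the other message being fixed: message `j` is drawn uniformly
from `J`, the receiver obtains `ρ j` and applies the POVM `D`. It is `0` if `J` is empty. -/
noncomputable def avgError (D ρ : J → Matrix ι ι ℂ) : ℝ := 𝔼 j, ((1 - D j) * ρ j).trace.re

theorem avgError_fin {N : ℕ} (D ρ : Fin N → Matrix ι ι ℂ) :
    avgError D ρ = (N : ℝ)⁻¹ * ∑ j, ((1 - D j) * ρ j).trace.re := by
  rw [avgError, Fintype.expect_eq_sum_div_card, Fintype.card_fin, div_eq_inv_mul]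

theorem avgError_reindex {K κ : Type*} [Fintype K] [Fintype κ] [DecidableEq κ]
    (D ρ : J → Matrix ι ι ℂ) (f : K ≃ J) (e : ι ≃ κ) :
    avgError (fun k => reindex e e (D (f k))) (fun k => reindex e e (ρ (f k))) = avgError D ρ := by
  refine Fintype.expect_equiv f _ _ fun k => ?_
  have hmul : (1 - reindex e e (D (f k))) * reindex e e (ρ (f k)) =
      reindex e e ((1 - D (f k)) * ρ (f k)) := by
    simp only [← coe_reindexAlgEquiv ℂ ℂ, map_sub, map_one, map_mul]
  rw [hmul, trace_reindex]

theorem avgError_kronecker_le {D ρ : J → Matrix ι ι ℂ} {D' ρ' : J' → Matrix ι' ι' ℂ}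
    (hD : IsPOVM D) (hD' : IsPOVM D') (hρ : ∀ j, IsSubstate (ρ j)) (hρ' : ∀ j, IsSubstate (ρ' j)) :
    avgError (fun k : J × J' => D k.1 ⊗ₖ D' k.2) (fun k => ρ k.1 ⊗ₖ ρ' k.2) ≤
      avgError D ρ + avgError D' ρ' := by
  refine (expect_le_expect fun k _ => ?_).trans
    (expect_product_add_le univ univ (fun j _ => ?_) fun j _ => ?_)
  · exact (Complex.le_def.mp <| trace_one_sub_kronecker_mul_le (hD.one_sub_posSemidef k.1)
      (hD'.one_sub_posSemidef k.2) (hρ k.1) (hρ' k.2)).1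
  · exact (Complex.le_def.mp <| trace_mul_nonneg_of_posSemidef (hD.one_sub_posSemidef j) (hρ j).1).1
  · exact (Complex.le_def.mp <|
      trace_mul_nonneg_of_posSemidef (hD'.one_sub_posSemidef j) (hρ' j).1).1

end Kronecker

section Concatenation

variable {ι : Type*} {m n J J' : ℕ}

/-- The family of tensor products of the members of two families of operators on blocks of lengths
`m` and `n`, as operators on the concatenated block. The index `k : Fin (J * J')` stands for the
pair `(k.divNat, k.modNat)`. Serves both for decoders and for channel outputs. -/
def blockTensor (D : Fin J → Matrix (Fin m → ι) (Fin m → ι) ℂ)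
    (D' : Fin J' → Matrix (Fin n → ι) (Fin n → ι) ℂ) (k : Fin (J * J')) :
    Matrix (Fin (m + n) → ι) (Fin (m + n) → ι) ℂ :=
  reindex (Fin.appendEquiv m n) (Fin.appendEquiv m n) (D k.divNat ⊗ₖ D' k.modNat)

variable [Fintype ι]

theorem cqPow_append {A : Type*} (W : A → Matrix ι ι ℂ) (x : Fin J → Fin m → A)
    (y : Fin J' → Fin n → A) (k : Fin (J * J')) :
    cqPow W (m + n) (Fin.append (x k.divNat) (y k.modNat)) =
      blockTensor (fun j => cqPow W m (x j)) (fun j => cqPow W n (y j)) k := by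
  ext i j
  simp [blockTensor, Fin.appendEquiv, cqPow, tensorPow, Fin.prod_univ_add]

variable [DecidableEq ι] {D : Fin J → Matrix (Fin m → ι) (Fin m → ι) ℂ}
  {D' : Fin J' → Matrix (Fin n → ι) (Fin n → ι) ℂ}

protected theorem IsPOVM.blockTensor (hD : IsPOVM D) (hD' : IsPOVM D') :
    IsPOVM (blockTensor D D') :=
  (hD.kronecker hD').reindex finProdFinEquiv.symm (Fin.appendEquiv m n)

theorem avgError_blockTensor_le {ρ : Fin J → Matrix (Fin m → ι) (Fin m → ι) ℂ}
    {ρ' : Fin J' → Matrix (Fin n → ι) (Fin n → ι) ℂ} (hD : IsPOVM D) (hD' : IsPOVM D')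
    (hρ : ∀ j, IsSubstate (ρ j)) (hρ' : ∀ j, IsSubstate (ρ' j)) :
    avgError (blockTensor D D') (blockTensor ρ ρ') ≤ avgError D ρ + avgError D' ρ' :=
  (avgError_reindex (fun k : Fin J × Fin J' => D k.1 ⊗ₖ D' k.2) (fun k => ρ k.1 ⊗ₖ ρ' k.2)
    finProdFinEquiv.symm (Fin.appendEquiv m n)).trans_le (avgError_kronecker_le hD hD' hρ hρ')

theorem avgError_cqPow_append_le {A : Type*} {W : A → Matrix ι ι ℂ} (hW : ∀ a, IsSubstate (W a))
    (hD : IsPOVM D) (hD' : IsPOVM D') (x : Fin J → Fin m → A) (y : Fin J' → Fin n → A) :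
    avgError (blockTensor D D')
        (fun k => cqPow W (m + n) (Fin.append (x k.divNat) (y k.modNat))) ≤
      avgError D (fun j => cqPow W m (x j)) + avgError D' (fun j => cqPow W n (y j)) := by
  simp only [cqPow_append]
  exact avgError_blockTensor_le hD hD' (fun j => tensorPow_isSubstate fun k => hW (x j k))
    fun j => tensorPow_isSubstate fun k => hW (y j k)

end Concatenation

theorem time_sharing_general {A ι₁ ι₂ : Type*} [Fintype A] [Fintype ι₁] [DecidableEq ι₁]
    [Fintype ι₂] [DecidableEq ι₂] {W1 : A → Matrix ι₁ ι₁ ℂ} {W2 : A → Matrix ι₂ ι₂ ℂ}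
    (hW1 : ∀ a, IsSubstate (W1 a)) (hW2 : ∀ a, IsSubstate (W2 a))
    {m n J1 J2 J1' J2' : ℕ} {ε₁ ε₂ δ₁ δ₂ : ℝ}
    (h : BroadcastCodeExists W1 W2 m J1 J2 ε₁ ε₂)
    (h' : BroadcastCodeExists W1 W2 n J1' J2' δ₁ δ₂) :
    BroadcastCodeExists W1 W2 (m + n) (J1 * J1') (J2 * J2') (ε₁ + δ₁) (ε₂ + δ₂) := by
  simp only [BroadcastCodeExists, ← avgError_fin] at h h' ⊢
  obtain ⟨w, D1, D2, hD1, hD2, herr1, herr2⟩ := h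
  obtain ⟨w', D1', D2', hD1', hD2', herr1', herr2'⟩ := h'
  refine ⟨fun q => Fin.append (w (q.1.divNat, q.2.divNat)) (w' (q.1.modNat, q.2.modNat)),
    fun m2 => blockTensor (D1 m2.divNat) (D1' m2.modNat),
    fun m1 => blockTensor (D2 m1.divNat) (D2' m1.modNat),
    fun m2 => (hD1 m2.divNat).blockTensor (hD1' m2.modNat),
    fun m1 => (hD2 m1.divNat).blockTensor (hD2' m1.modNat), fun m2 => ?_, fun m1 => ?_⟩
  · exact (avgError_cqPow_append_le hW1 (hD1 m2.divNat) (hD1' m2.modNat)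
      (fun j => w (j, m2.divNat)) fun j => w' (j, m2.modNat)).trans
      (add_le_add (herr1 m2.divNat) (herr1' m2.modNat))
  · exact (avgError_cqPow_append_le hW2 (hD2 m1.divNat) (hD2' m1.modNat)
      (fun j => w (m1.divNat, j)) fun j => w' (m1.modNat, j)).trans
      (add_le_add (herr2 m1.divNat) (herr2' m1.modNat))

/-- Time-sharing (concatenation) for bidirectional broadcast codes. -/
theorem time_sharing
    {A ι₁ ι₂ : Type*} [Fintype A] [Fintype ι₁] [DecidableEq ι₁] [Fintype ι₂] [DecidableEq ι₂]
    (W1 : A → Matrix ι₁ ι₁ ℂ) (W2 : A → Matrix ι₂ ι₂ ℂ)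
    (hW1 : ∀ a, IsState (W1 a)) (hW2 : ∀ a, IsState (W2 a))
    (m n J1 J2 J1' J2' : ℕ) (ε₁ ε₂ : ℝ)
    (h1 : BroadcastCodeExists W1 W2 m J1 J2 ε₁ ε₁)
    (h2 : BroadcastCodeExists W1 W2 n J1' J2' ε₂ ε₂) :
    BroadcastCodeExists W1 W2 (m + n) (J1 * J1') (J2 * J2') (ε₁ + ε₂) (ε₁ + ε₂) :=
  time_sharing_general (fun a => (hW1 a).isSubstate) (fun a => (hW2 a).isSubstate) h1 h2
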